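/- Absolute convergence criterion for S-sums: let k ≥ 1, let a_1,…,a_k be positive integers and x_1,…,x_k nonzero reals. The S-sum S_{a_1,…,a_k}(x_1,…,x_k; n) is absolutely convergent as n → ∞ if and only if one of the following two conditions holds: (1) |x_1| < 1 and |x_1 x_2| ≤ 1 and … and |x_1 x_2 ⋯ x_k| ≤ 1; (2) a_1 > 1 and |x_1| = 1 and |x_2| ≤ 1 and |x_2 x_3| ≤ 1 and … and |x_2 x_3 ⋯ x_k| ≤ 1. -/

import Mathlib

open Filter

/-- S-sums: `SSum [(a₁,x₁),…] n` is `S_{a₁,…}(x₁,…; n)`; the empty sum equals `1`. -/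
noncomputable def SSum : List (ℕ × ℝ) → ℕ → ℝ
  | [], _ => 1
  | (a, x) :: t, n => ∑ i ∈ Finset.Icc 1 n, x ^ i / (i : ℝ) ^ a * SSum t i

/-!
With nonnegative arguments an S-sum is monotone in `n`, so it converges iff it is bounded, and
boundedness is decided by merging the two outermost indices `(a, x)`, `(b, y)` into a single one
with argument `x * y`.

Keeping only the diagonal terms bounds the S-sum below by the merged one with exponent `a + b`.
Since a bounded S-sum forces `∑ x ^ i / i ^ a` to converge, hence `x ≤ 1`, repeated
merging shows that every prefix product is at most `1`.

Conversely, summing over the outermost variable first and using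
`∑_{i ≥ j} x ^ i / i ^ a ≤ C x ^ j / j`, valid for `x < 1` and for `x = 1 < a`, bounds the S-sum
above by `C` times the merged one with exponent `b + 1`. As `b + 1 > 1`, the merged S-sum again
satisfies the hypotheses, so induction on the depth applies.
-/

section PowDivPow

variable {x : ℝ} {a : ℕ}

lemma le_one_of_summable_pow_div_pow (h : Summable fun i : ℕ => x ^ i / (i : ℝ) ^ a) :
    x ≤ 1 := by
  by_contra! hx
  have h_prod : Tendsto (fun n : ℕ => x ^ n / (n : ℝ) ^ a * ((n : ℝ) ^ a / x ^ n)) atTop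
      (nhds 0) := by
    simpa only [zero_mul] using
      h.tendsto_atTop_zero.mul (tendsto_pow_const_div_const_pow_of_one_lt a hx)
  refine zero_ne_one (tendsto_nhds_unique h_prod (tendsto_const_nhds.congr' ?_))
  filter_upwards [eventually_gt_atTop 0] with n hn
  have : (n : ℝ) ≠ 0 := by positivity
  field_simp

lemma sum_Icc_pow_div_pow_le_of_lt_one (hx₀ : 0 ≤ x) (hx₁ : x < 1) (ha : 0 < a) {j : ℕ}
    (hj : 0 < j) (n : ℕ) :
    ∑ i ∈ Finset.Icc j n, x ^ i / (i : ℝ) ^ a ≤ (1 - x)⁻¹ * (x ^ j / j) :=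
  calc
    _ ≤ ∑ i ∈ Finset.Icc j n, x ^ i / (j : ℝ) := by
      refine Finset.sum_le_sum fun i hi => ?_
      have hji : j ≤ i := (Finset.mem_Icc.1 hi).1
      gcongr
      calc (j : ℝ) ≤ i := mod_cast hji
        _ ≤ (i : ℝ) ^ a := le_self_pow₀ (mod_cast hj.trans_le hji) ha.ne'
    _ = (∑ i ∈ Finset.Ico j (n + 1), x ^ i) / j := by
      rw [Finset.sum_div, ← Finset.Ico_add_one_right_eq_Icc]
    _ ≤ x ^ j / (1 - x) / j := by
      gcongr
      exact geom_sum_Ico_le_of_lt_one hx₀ hx₁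
    _ = _ := by ring

lemma sum_Icc_one_div_pow_le (ha : 1 < a) {j : ℕ} (hj : 0 < j) (n : ℕ) :
    ∑ i ∈ Finset.Icc j n, 1 / (i : ℝ) ^ a ≤ 2 / j := by
  obtain ⟨k, rfl⟩ := Nat.exists_eq_add_one.2 hj
  calc
    _ ≤ ∑ i ∈ Finset.Icc (k + 1) n, ((i : ℝ) ^ 2)⁻¹ := by
      refine Finset.sum_le_sum fun i hi => ?_
      have hi₁ : 1 ≤ i := (Nat.le_add_left 1 k).trans (Finset.mem_Icc.1 hi).1
      rw [one_div]
      gcongr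
      · exact mod_cast hi₁
      · exact ha
    _ = ∑ i ∈ Finset.Ioo k (n + 1), ((i : ℝ) ^ 2)⁻¹ := rfl
    _ ≤ 2 / (k + 1 : ℕ) := by exact_mod_cast sum_Ioo_inv_sq_le k (n + 1)

lemma exists_sum_Icc_pow_div_pow_le (hx₀ : 0 ≤ x) (hx₁ : x ≤ 1) (ha : 0 < a)
    (hxa : x = 1 → 1 < a) :
    ∃ C ≥ (0 : ℝ), ∀ j n : ℕ, 0 < j →
      ∑ i ∈ Finset.Icc j n, x ^ i / (i : ℝ) ^ a ≤ C * (x ^ j / j) := by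
  rcases hx₁.lt_or_eq with hlt | rfl
  · exact ⟨(1 - x)⁻¹, inv_nonneg.2 (sub_nonneg.2 hx₁), fun j n hj =>
      sum_Icc_pow_div_pow_le_of_lt_one hx₀ hlt ha hj n⟩
  · refine ⟨2, zero_le_two, fun j n hj => ?_⟩
    simpa only [one_pow, mul_one_div] using sum_Icc_one_div_pow_le (hxa rfl) hj n

end PowDivPow

/-- The condition that all prefix products `x₁ ⋯ xⱼ` of a list `[x₁, …, xₖ]` are at most `1`.
Indices `j` beyond the length are harmless, as they repeat the full product. -/
def PrefixProdsLEOne (l : List ℝ) : Prop :=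
  ∀ j : ℕ, (l.take j).prod ≤ 1

namespace PrefixProdsLEOne

lemma singleton_iff {x : ℝ} : PrefixProdsLEOne [x] ↔ x ≤ 1 := by
  refine ⟨fun h => by simpa using h 1, fun h j => ?_⟩
  cases j <;> simp [h]

lemma cons_cons_iff {x y : ℝ} {l : List ℝ} :
    PrefixProdsLEOne (x :: y :: l) ↔ x ≤ 1 ∧ PrefixProdsLEOne (x * y :: l) := by
  refine ⟨fun h => ⟨by simpa using h 1, fun j => ?_⟩, fun ⟨hx, h⟩ j => ?_⟩
  · cases j with
    | zero => simp
    | succ j => simpa [mul_assoc] using h (j + 2)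
  · match j with
    | 0 => simp
    | 1 => simpa using hx
    | j + 2 => simpa [mul_assoc] using h (j + 1)

lemma head_le_one {x : ℝ} {l : List ℝ} (h : PrefixProdsLEOne (x :: l)) : x ≤ 1 := by
  simpa using h 1

lemma ofFn_iff {k : ℕ} {x : Fin (k + 1) → ℝ} :
    PrefixProdsLEOne (List.ofFn x) ↔ ∀ j, ∏ i ∈ Finset.Iic j, x i ≤ 1 := by
  have prod_take (j : ℕ) : ((List.ofFn x).take (j + 1)).prod =
      ∏ i ∈ Finset.Iic (⟨min j k, by omega⟩ : Fin (k + 1)), x i := by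
    rw [List.prod_take_ofFn]
    congr 1
    ext i
    simp only [Finset.mem_filter, Finset.mem_univ, true_and, Finset.mem_Iic, Fin.le_def]
    omega
  refine ⟨fun h j => ?_, fun h j => ?_⟩
  · simpa only [prod_take, min_eq_left (Fin.is_le j)] using h (j + 1)
  · cases j with
    | zero => simp
    | succ j => exact (prod_take j).trans_le (h _)

end PrefixProdsLEOne

namespace SSum

variable {a b : ℕ} {x y : ℝ} {t : List (ℕ × ℝ)}

lemma nonneg (ht : ∀ p ∈ t, 0 ≤ p.2) (n : ℕ) : 0 ≤ SSum t n := by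
  induction t generalizing n with
  | nil => simp [SSum]
  | cons p t ih =>
    obtain ⟨hp, ht⟩ := List.forall_mem_cons.1 ht
    exact Finset.sum_nonneg fun i _ => mul_nonneg (by positivity) (ih ht i)

lemma summand_nonneg (hx : 0 ≤ x) (ht : ∀ p ∈ t, 0 ≤ p.2) (i : ℕ) :
    0 ≤ x ^ i / (i : ℝ) ^ a * SSum t i :=
  mul_nonneg (by positivity) (nonneg ht i)

lemma monotone (ht : ∀ p ∈ t, 0 ≤ p.2) : Monotone (SSum t) := by
  cases t with
  | nil => exact monotone_const
  | cons p t =>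
    obtain ⟨hp, ht⟩ := List.forall_mem_cons.1 ht
    exact fun m n hmn => Finset.sum_le_sum_of_subset_of_nonneg (Finset.Icc_subset_Icc_right hmn)
      fun i _ _ => summand_nonneg hp ht i

lemma apply_one_pos (ht : ∀ p ∈ t, 0 < p.2) : 0 < SSum t 1 := by
  induction t with
  | nil => simp [SSum]
  | cons p t ih =>
    obtain ⟨hp, ht⟩ := List.forall_mem_cons.1 ht
    simpa [SSum] using mul_pos hp (ih ht)

lemma exists_tendsto_iff_bddAbove (ht : ∀ p ∈ t, 0 ≤ p.2) :
    (∃ L, Tendsto (SSum t) atTop (nhds L)) ↔ BddAbove (Set.range (SSum t)) :=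
  ⟨fun ⟨_, hL⟩ => hL.bddAbove_range, fun h => ⟨_, tendsto_atTop_ciSup (monotone ht) h⟩⟩

lemma merge_le (hx : 0 ≤ x) (hy : 0 ≤ y) (ht : ∀ p ∈ t, 0 ≤ p.2) (n : ℕ) :
    SSum ((a + b, x * y) :: t) n ≤ SSum ((a, x) :: (b, y) :: t) n := by
  refine Finset.sum_le_sum fun i hi => ?_
  calc (x * y) ^ i / (i : ℝ) ^ (a + b) * SSum t i
      = x ^ i / (i : ℝ) ^ a * (y ^ i / (i : ℝ) ^ b * SSum t i) := by
        rw [mul_pow, pow_add, mul_div_mul_comm, mul_assoc]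
    _ ≤ x ^ i / (i : ℝ) ^ a * SSum ((b, y) :: t) i := by
        gcongr
        exact Finset.single_le_sum (fun j _ => summand_nonneg hy ht j)
          (Finset.mem_Icc.2 ⟨(Finset.mem_Icc.1 hi).1, le_rfl⟩)

lemma cons_cons_eq_sum_mul_sum_Icc (n : ℕ) :
    SSum ((a, x) :: (b, y) :: t) n =
      ∑ j ∈ Finset.Icc 1 n, y ^ j / (j : ℝ) ^ b * SSum t j *
        ∑ i ∈ Finset.Icc j n, x ^ i / (i : ℝ) ^ a := by
  simp only [SSum, Finset.mul_sum]
  rw [Finset.sum_comm' (t' := Finset.Icc 1 n) (s' := fun j => Finset.Icc j n)]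
  · simp only [mul_comm]
  · simp only [Finset.mem_Icc]
    omega

lemma exists_le_merge (hx₀ : 0 ≤ x) (hx₁ : x ≤ 1) (ha : 0 < a) (hxa : x = 1 → 1 < a)
    (hy : 0 ≤ y) (ht : ∀ p ∈ t, 0 ≤ p.2) :
    ∃ C ≥ 0, ∀ n, SSum ((a, x) :: (b, y) :: t) n ≤ C * SSum ((b + 1, x * y) :: t) n := by
  obtain ⟨C, hC₀, hC⟩ := exists_sum_Icc_pow_div_pow_le hx₀ hx₁ ha hxa
  refine ⟨C, hC₀, fun n => ?_⟩
  rw [cons_cons_eq_sum_mul_sum_Icc, SSum, Finset.mul_sum]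
  refine Finset.sum_le_sum fun j hj => ?_
  calc y ^ j / (j : ℝ) ^ b * SSum t j * ∑ i ∈ Finset.Icc j n, x ^ i / (i : ℝ) ^ a
      ≤ y ^ j / (j : ℝ) ^ b * SSum t j * (C * (x ^ j / j)) := by
        gcongr
        · exact summand_nonneg hy ht j
        · exact hC j n (Finset.mem_Icc.1 hj).1
    _ = C * ((x * y) ^ j / (j : ℝ) ^ (b + 1) * SSum t j) := by ring

lemma bddAbove_of_prefixProdsLEOne (ha : 0 < a) (hx : 0 ≤ x)
    (ht : ∀ p ∈ t, 0 < p.1 ∧ 0 ≤ p.2) (hxa : x = 1 → 1 < a)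
    (h : PrefixProdsLEOne (x :: t.map Prod.snd)) :
    BddAbove (Set.range (SSum ((a, x) :: t))) := by
  induction t generalizing a x with
  | nil =>
    obtain ⟨C, -, hC⟩ := exists_sum_Icc_pow_div_pow_le hx h.head_le_one ha hxa
    exact ⟨_, Set.forall_mem_range.2 fun n => by simpa [SSum] using hC 1 n Nat.one_pos⟩
  | cons p t ih =>
    obtain ⟨⟨hb, hy⟩, ht⟩ := List.forall_mem_cons.1 ht
    obtain ⟨hx₁, h_merged⟩ := PrefixProdsLEOne.cons_cons_iff.1 h
    obtain ⟨C, hC₀, hC⟩ := exists_le_merge (b := p.1) hx hx₁ ha hxa hy fun q hq => (ht q hq).2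
    obtain ⟨B, hB⟩ : BddAbove (Set.range (SSum ((p.1 + 1, x * p.2) :: t))) :=
      ih (Nat.succ_pos _) (mul_nonneg hx hy) ht (fun _ => Nat.lt_add_of_pos_left hb) h_merged
    exact ⟨C * B, Set.forall_mem_range.2 fun n =>
      (hC n).trans (mul_le_mul_of_nonneg_left (hB ⟨n, rfl⟩) hC₀)⟩

lemma summable_of_bddAbove (hx : 0 ≤ x) (ht : ∀ p ∈ t, 0 < p.2)
    (h : BddAbove (Set.range (SSum ((a, x) :: t)))) :
    Summable fun i : ℕ => x ^ i / (i : ℝ) ^ a := by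
  obtain ⟨B, hB⟩ := h
  rw [← summable_nat_add_iff 1]
  refine summable_of_sum_range_le (c := B / SSum t 1) (fun i => by positivity) fun n => ?_
  rw [le_div_iff₀ (apply_one_pos ht)]
  calc (∑ i ∈ Finset.range n, x ^ (i + 1) / ((i + 1 : ℕ) : ℝ) ^ a) * SSum t 1
      = ∑ i ∈ Finset.Icc 1 n, x ^ i / (i : ℝ) ^ a * SSum t 1 := by
        rw [Finset.range_eq_Ico, Finset.sum_Ico_add' (fun i : ℕ => x ^ i / (i : ℝ) ^ a), zero_add,
          Finset.Ico_add_one_right_eq_Icc, Finset.sum_mul]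
    _ ≤ SSum ((a, x) :: t) n := by
        refine Finset.sum_le_sum fun i hi => ?_
        gcongr
        exact monotone (fun p hp => (ht p hp).le) (Finset.mem_Icc.1 hi).1
    _ ≤ B := hB ⟨n, rfl⟩

lemma prefixProdsLEOne_of_bddAbove (hx : 0 < x) (ht : ∀ p ∈ t, 0 < p.2)
    (h : BddAbove (Set.range (SSum ((a, x) :: t)))) :
    PrefixProdsLEOne (x :: t.map Prod.snd) := by
  induction t generalizing a x with
  | nil =>
    exact PrefixProdsLEOne.singleton_iff.2
      (le_one_of_summable_pow_div_pow (summable_of_bddAbove hx.le ht h))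
  | cons p t ih =>
    have hx₁ : x ≤ 1 := le_one_of_summable_pow_div_pow (summable_of_bddAbove hx.le ht h)
    obtain ⟨hy, ht⟩ := List.forall_mem_cons.1 ht
    have h_merged : BddAbove (Set.range (SSum ((a + p.1, x * p.2) :: t))) := by
      obtain ⟨B, hB⟩ := h
      exact ⟨B, Set.forall_mem_range.2 fun n =>
        (merge_le hx.le hy.le (fun q hq => (ht q hq).le) n).trans (hB ⟨n, rfl⟩)⟩
    exact PrefixProdsLEOne.cons_cons_iff.2 ⟨hx₁, ih (mul_pos hx hy) ht h_merged⟩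

theorem exists_tendsto_cons_iff (ht : ∀ p ∈ (a, x) :: t, 0 < p.1 ∧ 0 < p.2) :
    (∃ L, Tendsto (SSum ((a, x) :: t)) atTop (nhds L)) ↔
      PrefixProdsLEOne (x :: t.map Prod.snd) ∧ (x = 1 → 1 < a) := by
  rw [exists_tendsto_iff_bddAbove fun p hp => (ht p hp).2.le]
  obtain ⟨⟨ha, hx⟩, ht⟩ := List.forall_mem_cons.1 ht
  have ht_pos : ∀ p ∈ t, 0 < p.2 := fun p hp => (ht p hp).2
  refine ⟨fun h => ⟨prefixProdsLEOne_of_bddAbove hx ht_pos h, ?_⟩, fun ⟨h, hxa⟩ =>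
    bddAbove_of_prefixProdsLEOne ha hx.le (fun p hp => (ht p hp).imp_right le_of_lt) hxa h⟩
  rintro rfl
  simpa only [one_pow, Real.summable_one_div_nat_pow] using summable_of_bddAbove hx.le ht_pos h

end SSum

/-- Absolute convergence criterion for S-sums of depth `k + 1 ≥ 1`:
`S_{a₀,…,a_k}(x₀,…,x_k; n)` is absolutely convergent as `n → ∞` iff either
`|x₀| < 1` and all prefix products `|x₀⋯x_j| ≤ 1`, or `a₀ > 1`, `|x₀| = 1`
and all products `|x₁⋯x_j| ≤ 1`. -/
theorem SSum_abs_convergence_criterion (k : ℕ)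
    (a : Fin (k + 1) → ℕ) (x : Fin (k + 1) → ℝ)
    (ha : ∀ i, 0 < a i) (hx : ∀ i, x i ≠ 0) :
    (∃ L : ℝ, Tendsto (fun n => SSum (List.ofFn fun i => (a i, |x i|)) n)
        atTop (nhds L)) ↔
      ((|x 0| < 1 ∧ ∀ j : Fin (k + 1), |∏ i ∈ Finset.Iic j, x i| ≤ 1) ∨
        (1 < a 0 ∧ |x 0| = 1 ∧
          ∀ j : Fin (k + 1), |∏ i ∈ Finset.Ioc 0 j, x i| ≤ 1)) := by
  have h_pos : ∀ p ∈ List.ofFn fun i => (a i, |x i|), 0 < p.1 ∧ 0 < p.2 :=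
    List.forall_mem_ofFn_iff.2 fun i => ⟨ha i, abs_pos.2 (hx i)⟩
  have h_prefix : PrefixProdsLEOne (|x 0| :: (List.ofFn fun i : Fin k =>
      (a i.succ, |x i.succ|)).map Prod.snd) ↔ ∀ j, |∏ i ∈ Finset.Iic j, x i| ≤ 1 := by
    simpa [List.ofFn_succ, List.map_ofFn, Function.comp_def, Finset.abs_prod] using
      PrefixProdsLEOne.ofFn_iff (x := fun i => |x i|)
  have h_split (j : Fin (k + 1)) :
      |∏ i ∈ Finset.Iic j, x i| = |x 0| * |∏ i ∈ Finset.Ioc 0 j, x i| := by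
    rw [← abs_mul, Finset.mul_prod_Ioc_eq_prod_Icc (Fin.zero_le j), ← Finset.Icc_bot,
      bot_eq_zero]
  rw [List.ofFn_succ] at h_pos ⊢
  refine (SSum.exists_tendsto_cons_iff h_pos).trans ?_
  rw [h_prefix]
  by_cases h : |x 0| = 1
  · simp [h, h_split, and_comm]
  · have : (∀ j, |∏ i ∈ Finset.Iic j, x i| ≤ 1) → |x 0| < 1 := fun hj =>
      lt_of_le_of_ne (by simpa [h_split] using hj 0) h
    tauto
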